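/- arXiv:math/0006039 — 4 statements merged into one kernel-verified Lean document; each statement's English description precedes it below -/
import Mathlib

section
/- There is a constant C₅ depending only on C₀, n and d such that: if Q ⊂ R are concentric cubes and there is no (2,2^{d+1})-doubling cube of the form 2^k Q with k ≥ 0 and Q ⊂ 2^k Q ⊂ R, then δ(Q,R) ≤ C₅. -/
open MeasureTheory Metric Set Filter
open scoped ENNReal NNReal

noncomputable section

/-- The ambient Euclidean space `ℝ^d`. -/
abbrev Euc (d : ℕ) := EuclideanSpace ℝ (Fin d)

/-- A closed axis-parallel cube in `ℝ^d`, given by its center and side length. -/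
structure Cube (d : ℕ) where
  center : Euc d
  side : ℝ

namespace Cube

variable {d : ℕ}

/-- The set of points of the cube. -/
def toSet (Q : Cube d) : Set (Euc d) := {x | ∀ i, |x i - Q.center i| ≤ Q.side / 2}

/-- The concentric dilation `ρQ`. -/
def dilate (Q : Cube d) (ρ : ℝ) : Cube d := ⟨Q.center, ρ * Q.side⟩

/-- `Q.encl R` is the smallest cube concentric with `Q` containing `Q ∪ R`
(denoted `Q_R` in the paper). -/
def encl (Q R : Cube d) : Cube d :=
  ⟨Q.center, max Q.side (⨆ i, 2 * |R.center i - Q.center i| + R.side)⟩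

end Cube

variable {d : ℕ}

/-- The support of a measure: the points all of whose neighbourhoods have positive
measure. -/
def msupport (μ : Measure (Euc d)) : Set (Euc d) := {x | ∀ r > 0, 0 < μ (ball x r)}

/-- A cube of the lattice: positive side length and centered at a point of `supp μ`. -/
def IsCube (μ : Measure (Euc d)) (Q : Cube d) : Prop :=
  Q.center ∈ msupport μ ∧ 0 < Q.side

/-- The growth condition `μ(B(x,r)) ≤ C₀ rⁿ` for all `x ∈ supp μ`, `r > 0`. -/
def GrowthCond (μ : Measure (Euc d)) (C₀ n : ℝ) : Prop :=
  ∀ x ∈ msupport μ, ∀ r : ℝ, 0 < r → μ (ball x r) ≤ ENNReal.ofReal (C₀ * r ^ n)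

/-- The coefficient `δ(Q,R)`. -/
def cdelta (μ : Measure (Euc d)) (n : ℝ) (Q R : Cube d) : ℝ :=
  max (∫ x in (Q.encl R).toSet \ Q.toSet, ‖x - Q.center‖ ^ (-n) ∂μ)
      (∫ x in (R.encl Q).toSet \ R.toSet, ‖x - R.center‖ ^ (-n) ∂μ)

/-- An `(α,β)`-doubling cube: `μ(αQ) ≤ β μ(Q)`. -/
def IsDoublingWith (μ : Measure (Euc d)) (α β : ℝ) (Q : Cube d) : Prop :=
  μ (Q.dilate α).toSet ≤ ENNReal.ofReal β * μ Q.toSet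

/-- A `(2,2^(d+1))`-doubling cube. -/
def IsDoubling (μ : Measure (Euc d)) (Q : Cube d) : Prop :=
  μ (Q.dilate 2).toSet ≤ 2 ^ (d + 1) * μ Q.toSet

/-- An `n`-dimensional Calderón–Zygmund kernel with size constant `C₁`,
regularity constant `C₂` and regularity exponent `δ`. -/
structure IsCZKernel (d : ℕ) (n C₁ C₂ δ : ℝ) (k : Euc d → Euc d → ℝ) : Prop where
  measurable : Measurable (Function.uncurry k)
  size : ∀ x y, x ≠ y → |k x y| ≤ C₁ / ‖x - y‖ ^ n
  reg : ∀ x x' y : Euc d, ‖x - x'‖ ≤ ‖x - y‖ / 2 →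
    |k x y - k x' y| + |k y x - k y x'| ≤ C₂ * ‖x - x'‖ ^ δ / ‖x - y‖ ^ (n + δ)

/-- The truncated operator `T_ε`. -/
def trunc (μ : Measure (Euc d)) (k : Euc d → Euc d → ℝ) (ε : ℝ) (f : Euc d → ℝ)
    (x : Euc d) : ℝ :=
  ∫ y in {y | ε < dist x y}, k x y * f y ∂μ

/-- `T_ε χ_Q`, the truncated operator applied to the characteristic function of a
cube `Q`. -/
def truncCube (μ : Measure (Euc d)) (k : Euc d → Euc d → ℝ) (ε : ℝ) (Q : Cube d)
    (x : Euc d) : ℝ :=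
  ∫ y in {y | ε < dist x y} ∩ Q.toSet, k x y ∂μ

/-- The function representing `T_ε(1)` modulo additive constants, relative to a
base point `x₀`. -/
def truncOne (μ : Measure (Euc d)) (k : Euc d → Euc d → ℝ) (x₀ : Euc d) (ε : ℝ)
    (x : Euc d) : ℝ :=
  ∫ y, ({y | ε < dist x y}.indicator (fun z => k x z) y
      - {y | ε < dist x₀ y}.indicator (fun z => k x₀ z) y) ∂μ

/-- `f ∈ BMO_ρ(μ)` with constant `C`. -/
def BMOWith (μ : Measure (Euc d)) (ρ C : ℝ) (f : Euc d → ℝ) : Prop :=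
  ∀ Q : Cube d, IsCube μ Q →
    ∫ x in Q.toSet, |f x - ⨍ y in Q.toSet, f y ∂μ| ∂μ ≤ C * (μ (Q.dilate ρ).toSet).toReal

/-- `f ∈ RBMO(μ)` with constant `C`. -/
def RBMOWith (μ : Measure (Euc d)) (n C : ℝ) (f : Euc d → ℝ) : Prop :=
  (∀ Q : Cube d, IsCube μ Q → IsDoubling μ Q →
    ∫ x in Q.toSet, |f x - ⨍ y in Q.toSet, f y ∂μ| ∂μ ≤ C * (μ Q.toSet).toReal) ∧
  (∀ Q R : Cube d, IsCube μ Q → IsCube μ R → IsDoubling μ Q → IsDoubling μ R →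
    Q.toSet ⊆ R.toSet →
    |(⨍ x in Q.toSet, f x ∂μ) - ⨍ x in R.toSet, f x ∂μ| ≤ C * (1 + cdelta μ n Q R))

/-- The distance between two sets. -/
def setDist (s t : Set (Euc d)) : ℝ := sInf (Set.image2 dist s t)

/-- `δ(x, R)` for a point `x`, defined through the smallest cube centered at `x`
containing `R`; with values in `[0,∞]`. -/
def deltaPt (μ : Measure (Euc d)) (n : ℝ) (x : Euc d) (R : Cube d) : ℝ≥0∞ :=
  ∫⁻ y in ((Cube.mk x 0).encl R).toSet \ {x}, ENNReal.ofReal (‖y - x‖ ^ (-n)) ∂μ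

/-- `δ(Q, ℝ^d)`, with values in `[0,∞]`. -/
def deltaFull (μ : Measure (Euc d)) (n : ℝ) (Q : Cube d) : ℝ≥0∞ :=
  ∫⁻ x in Q.toSetᶜ, ENNReal.ofReal (‖x - Q.center‖ ^ (-n)) ∂μ

/-- The integral operator with kernel `s`. -/
def Sop (μ : Measure (Euc d)) (s : Euc d → Euc d → ℝ) (f : Euc d → ℝ) (x : Euc d) : ℝ :=
  ∫ y, s x y * f y ∂μ

/-- The difference operators `D_k = S_k - S_{k-1}`. -/
def Dop (μ : Measure (Euc d)) (s : ℤ → Euc d → Euc d → ℝ) (j : ℤ) (f : Euc d → ℝ) :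
    Euc d → ℝ :=
  fun x => Sop μ (s j) f x - Sop μ (s (j - 1)) f x

/-!
If the cubes `α ^ k Q`, `k < N`, are not `(α, β)`-doubling, their masses grow by a factor of at
least `β` at each step, so `μ(α ^ (k + 1) Q) ≤ β ^ (k + 1 - N) μ(α ^ N Q)`. On the annulus
`α ^ (k + 1) Q \ α ^ k Q` the kernel `|x - z_Q|⁻ⁿ` is at most `α ^ ((N - k) n)` times its size at
the scale of `α ^ N Q`. Since `α ^ n < β`, the contributions of the annuli form a geometric series
dominated by the outermost one, and there the growth condition bounds the mass by the `n`-th power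
of the side length.
-/

section GeometricGrowth

variable {X : Type*} [MeasurableSpace X] {μ : Measure X} {f : X → ℝ≥0∞} {A : ℕ → Set X}
  {a : ℕ → ℝ≥0∞} {b γ : ℝ≥0∞} {N : ℕ}

lemma setLIntegral_diff_le_geom_sum (hf : ∀ k < N, ∀ x ∈ A (k + 1) \ A k, f x ≤ a k)
    (ha : ∀ k < N, a k ≤ γ * a (k + 1)) (hμ : ∀ k < N, μ (A k) ≤ b * μ (A (k + 1))) :
    ∫⁻ x in A N \ A 0, f x ∂μ ≤ γ * (∑ j ∈ Finset.range N, (γ * b) ^ j) * a N * μ (A N) := by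
  induction N with
  | zero => simp
  | succ N ih =>
    have inner : ∫⁻ x in A N \ A 0, f x ∂μ ≤
        γ * (∑ j ∈ Finset.range N, (γ * b) ^ j) * a N * μ (A N) :=
      ih (fun k hk ↦ hf k (hk.trans N.lt_succ_self)) (fun k hk ↦ ha k (hk.trans N.lt_succ_self))
        (fun k hk ↦ hμ k (hk.trans N.lt_succ_self))
    have outer : ∫⁻ x in A (N + 1) \ A N, f x ∂μ ≤ a N * μ (A (N + 1)) :=
      calc ∫⁻ x in A (N + 1) \ A N, f x ∂μ
          ≤ ∫⁻ _ in A (N + 1) \ A N, a N ∂μ :=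
            setLIntegral_mono measurable_const (hf N N.lt_succ_self)
        _ = a N * μ (A (N + 1) \ A N) := setLIntegral_const _ _
        _ ≤ a N * μ (A (N + 1)) := by gcongr; exact sdiff_subset
    calc ∫⁻ x in A (N + 1) \ A 0, f x ∂μ
        ≤ ∫⁻ x in (A N \ A 0) ∪ (A (N + 1) \ A N), f x ∂μ := by
          rw [union_comm]
          exact lintegral_mono_set (sdiff_triangle _ _ _)
      _ ≤ (∫⁻ x in A N \ A 0, f x ∂μ) + ∫⁻ x in A (N + 1) \ A N, f x ∂μ :=
          lintegral_union_le _ _ _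
      _ ≤ γ * (∑ j ∈ Finset.range N, (γ * b) ^ j) * a N * (b * μ (A (N + 1)))
            + a N * μ (A (N + 1)) := by
          gcongr
          exact inner.trans (by gcongr; exact hμ N N.lt_succ_self)
      _ = (∑ j ∈ Finset.range (N + 1), (γ * b) ^ j) * a N * μ (A (N + 1)) := by
          rw [geom_sum_succ]; ring
      _ ≤ (∑ j ∈ Finset.range (N + 1), (γ * b) ^ j) * (γ * a (N + 1)) * μ (A (N + 1)) := by
          gcongr
          exact ha N N.lt_succ_self
      _ = γ * (∑ j ∈ Finset.range (N + 1), (γ * b) ^ j) * a (N + 1) * μ (A (N + 1)) := by ring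

lemma setLIntegral_diff_le_of_geometric_growth
    (hf : ∀ k < N, ∀ x ∈ A (k + 1) \ A k, f x ≤ a k)
    (ha : ∀ k < N, a k ≤ γ * a (k + 1)) (hμ : ∀ k < N, μ (A k) ≤ b * μ (A (k + 1))) :
    ∫⁻ x in A N \ A 0, f x ∂μ ≤ γ * (1 - γ * b)⁻¹ * a N * μ (A N) := by
  refine (setLIntegral_diff_le_geom_sum hf ha hμ).trans ?_
  gcongr
  exact (ENNReal.sum_le_tsum _).trans_eq (ENNReal.tsum_geometric _)

end GeometricGrowth

lemma norm_le_sqrt_card_mul_of_forall_norm_le {𝕜 ι : Type*} [RCLike 𝕜] [Fintype ι]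
    {x : EuclideanSpace 𝕜 ι} {r : ℝ} (hr : 0 ≤ r) (h : ∀ i, ‖x i‖ ≤ r) :
    ‖x‖ ≤ √(Fintype.card ι) * r := by
  rw [EuclideanSpace.norm_eq, Real.sqrt_le_left (by positivity), mul_pow,
    Real.sq_sqrt (Nat.cast_nonneg _)]
  calc ∑ i, ‖x i‖ ^ 2 ≤ ∑ _ : ι, r ^ 2 := by
        gcongr with i
        exact h i
    _ = Fintype.card ι * r ^ 2 := by simp

namespace Cube

variable {Q R : Cube d} {n : ℝ}

lemma toSet_subset_toSet (hc : Q.center = R.center) (h : Q.side ≤ R.side) :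
    Q.toSet ⊆ R.toSet := by
  intro x hx i
  rw [← hc]
  exact (hx i).trans (by gcongr)

lemma toSet_subset_toSet_dilate (hQ : 0 ≤ Q.side) {ρ : ℝ} (hρ : 1 ≤ ρ) :
    Q.toSet ⊆ (Q.dilate ρ).toSet :=
  toSet_subset_toSet rfl (le_mul_of_one_le_left hQ hρ)

lemma dilate_one : Q.dilate 1 = Q := by
  simp [dilate]

lemma dilate_dilate (ρ σ : ℝ) : (Q.dilate ρ).dilate σ = Q.dilate (σ * ρ) := by
  simp [dilate, mul_assoc]

lemma encl_of_center_eq [Nonempty (Fin d)] (hc : Q.center = R.center) :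
    Q.encl R = ⟨Q.center, max Q.side R.side⟩ := by
  simp [encl, hc]

lemma toSet_encl_of_center_eq (hc : Q.center = R.center) :
    (Q.encl R).toSet = Q.toSet ∪ R.toSet := by
  rcases isEmpty_or_nonempty (Fin d) with _ | _
  · ext x
    simp [toSet]
  rw [encl_of_center_eq hc]
  rcases le_total Q.side R.side with h | h
  · rw [max_eq_right h, hc]
    exact (union_eq_right.2 (toSet_subset_toSet hc h)).symm
  · rw [max_eq_left h]
    exact (union_eq_left.2 (toSet_subset_toSet hc.symm h)).symm

lemma toSet_subset_ball (hQ : 0 < Q.side) : Q.toSet ⊆ ball Q.center ((√d + 1) * Q.side) := by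
  intro x hx
  rw [mem_ball, dist_eq_norm]
  have h : ‖x - Q.center‖ ≤ √d * (Q.side / 2) := by
    simpa only [Fintype.card_fin] using
      norm_le_sqrt_card_mul_of_forall_norm_le (x := x - Q.center) (half_pos hQ).le hx
  nlinarith [Real.sqrt_nonneg d]

lemma half_side_lt_norm_sub {x : Euc d} (hx : x ∉ Q.toSet) : Q.side / 2 < ‖x - Q.center‖ := by
  obtain ⟨i, hi⟩ : ∃ i, Q.side / 2 < |x i - Q.center i| := by
    simpa only [toSet, mem_ofPred_eq, not_forall, not_le] using hx
  exact hi.trans_le (PiLp.norm_apply_le (x - Q.center) i)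

lemma norm_sub_rpow_neg_le (hn : 0 ≤ n) (hQ : 0 < Q.side) {x : Euc d} (hx : x ∉ Q.toSet) :
    ‖x - Q.center‖ ^ (-n) ≤ (Q.side / 2) ^ (-n) :=
  Real.rpow_le_rpow_of_nonpos (half_pos hQ) (half_side_lt_norm_sub hx).le (neg_nonpos.2 hn)

lemma half_side_rpow_neg_eq (hQ : 0 ≤ Q.side) {ρ : ℝ} (hρ : 0 < ρ) :
    (Q.side / 2) ^ (-n) = ρ ^ n * ((Q.dilate ρ).side / 2) ^ (-n) := by
  rw [dilate, mul_div_assoc, Real.mul_rpow hρ.le (by positivity), ← mul_assoc,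
    ← Real.rpow_add hρ, add_neg_cancel, Real.rpow_zero, one_mul]

lemma exists_dilate_pow_subset_subset {α : ℝ} (hα : 1 < α) (hQ : 0 < Q.side)
    (hc : Q.center = R.center) (hQR : Q.side ≤ R.side) :
    ∃ N : ℕ, (∀ k ≤ N, (Q.dilate (α ^ k)).toSet ⊆ R.toSet) ∧
      R.toSet ⊆ (Q.dilate (α ^ (N + 1))).toSet := by
  obtain ⟨N, hNR, hRN⟩ := exists_nat_pow_near ((one_le_div hQ).2 hQR) hα
  rw [le_div_iff₀ hQ] at hNR
  rw [div_lt_iff₀ hQ] at hRN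
  refine ⟨N, fun k hk ↦ toSet_subset_toSet hc ?_, toSet_subset_toSet hc.symm hRN.le⟩
  calc α ^ k * Q.side ≤ α ^ N * Q.side := by gcongr; exact hα.le
    _ ≤ R.side := hNR

end Cube

/-- The bound for `∫_{R \ Q} |x - z_Q|⁻ⁿ dμ` when no cube `α ^ k Q` between `Q` and `R` is
`(α, β)`-doubling. The first two factors are `α ^ n / (1 - α ^ n / β)`, the sum of the geometric
series of annuli; the last one is the growth condition on a ball containing the outermost cube.
It is `[0, ∞]`-valued because it bounds a lower Lebesgue integral. -/
def gapConst (d : ℕ) (C₀ n α β : ℝ) : ℝ≥0∞ :=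
  ENNReal.ofReal (α ^ n) * (1 - ENNReal.ofReal (α ^ n) * (ENNReal.ofReal β)⁻¹)⁻¹ *
    ENNReal.ofReal (C₀ * (2 * (√d + 1)) ^ n)

lemma gapConst_ne_top {C₀ n α β : ℝ} (hβ : 0 < β) (hαβ : α ^ n < β) : gapConst d C₀ n α β ≠ ∞ := by
  have ratio_lt_one : ENNReal.ofReal (α ^ n) * (ENNReal.ofReal β)⁻¹ < 1 := by
    rw [← div_eq_mul_inv, ENNReal.div_lt_iff (by simp [hβ]) (by simp), one_mul]
    exact (ENNReal.ofReal_lt_ofReal_iff hβ).2 hαβ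
  have sum_ne_top : (1 - ENNReal.ofReal (α ^ n) * (ENNReal.ofReal β)⁻¹)⁻¹ ≠ ∞ :=
    ENNReal.inv_ne_top.2 (tsub_pos_of_lt ratio_lt_one).ne'
  exact ENNReal.mul_ne_top (ENNReal.mul_ne_top ENNReal.ofReal_ne_top sum_ne_top)
    ENNReal.ofReal_ne_top

section Measure

variable {μ : Measure (Euc d)} {C₀ n α β : ℝ} {Q R : Cube d}

lemma isDoublingWith_two_iff :
    IsDoublingWith μ 2 (2 ^ (d + 1)) Q ↔ IsDoubling μ Q := by
  rw [IsDoublingWith, IsDoubling, ENNReal.ofReal_pow zero_le_two, ENNReal.ofReal_ofNat]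

lemma measure_toSet_le_of_not_isDoublingWith (hβ : 0 < β) (hQ : ¬ IsDoublingWith μ α β Q) :
    μ Q.toSet ≤ (ENNReal.ofReal β)⁻¹ * μ (Q.dilate α).toSet :=
  (ENNReal.mul_le_iff_le_inv (ENNReal.ofReal_pos.2 hβ).ne' ENNReal.ofReal_ne_top).1
    (not_le.1 hQ).le

lemma IsCube.dilate (hQ : IsCube μ Q) {ρ : ℝ} (hρ : 0 < ρ) : IsCube μ (Q.dilate ρ) :=
  ⟨hQ.1, mul_pos hρ hQ.2⟩

lemma GrowthCond.measure_toSet_le (hμ : GrowthCond μ C₀ n) (hQ : IsCube μ Q) :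
    μ Q.toSet ≤ ENNReal.ofReal (C₀ * ((√d + 1) * Q.side) ^ n) :=
  (measure_mono (Cube.toSet_subset_ball hQ.2)).trans
    (hμ _ hQ.1 _ (mul_pos (by positivity) hQ.2))

lemma GrowthCond.rpow_neg_mul_measure_toSet_le (hμ : GrowthCond μ C₀ n) (hQ : IsCube μ Q) :
    ENNReal.ofReal ((Q.side / 2) ^ (-n)) * μ Q.toSet ≤
      ENNReal.ofReal (C₀ * (2 * (√d + 1)) ^ n) := by
  have hside : 0 < Q.side / 2 := half_pos hQ.2
  calc ENNReal.ofReal ((Q.side / 2) ^ (-n)) * μ Q.toSet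
      ≤ ENNReal.ofReal ((Q.side / 2) ^ (-n)) *
          ENNReal.ofReal (C₀ * ((√d + 1) * Q.side) ^ n) := by
        gcongr
        exact hμ.measure_toSet_le hQ
    _ = ENNReal.ofReal (C₀ * (2 * (√d + 1)) ^ n) := by
        rw [← ENNReal.ofReal_mul (by positivity)]
        have hscale : (√d + 1) * Q.side = 2 * (√d + 1) * (Q.side / 2) := by ring
        rw [hscale, Real.mul_rpow (by positivity) hside.le, Real.rpow_neg hside.le]
        congr 1
        field_simp

lemma cdelta_eq_setIntegral_diff (hc : Q.center = R.center) (hQR : Q.toSet ⊆ R.toSet) :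
    cdelta μ n Q R = ∫ x in R.toSet \ Q.toSet, ‖x - Q.center‖ ^ (-n) ∂μ := by
  rw [cdelta, Cube.toSet_encl_of_center_eq hc, Cube.toSet_encl_of_center_eq hc.symm,
    union_eq_right.2 hQR, union_eq_left.2 hQR, sdiff_self, setIntegral_empty]
  exact max_eq_left (integral_nonneg fun x ↦ by positivity)

lemma setLIntegral_dilate_pow_diff_le_mul_measure (hn : 0 ≤ n) (hα : 0 < α) (hβ : 0 < β)
    (hQ : 0 < Q.side) {N : ℕ} (hgap : ∀ k < N, ¬ IsDoublingWith μ α β (Q.dilate (α ^ k))) :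
    ∫⁻ x in (Q.dilate (α ^ N)).toSet \ Q.toSet, ENNReal.ofReal (‖x - Q.center‖ ^ (-n)) ∂μ ≤
      ENNReal.ofReal (α ^ n) * (1 - ENNReal.ofReal (α ^ n) * (ENNReal.ofReal β)⁻¹)⁻¹ *
        ENNReal.ofReal (((Q.dilate (α ^ N)).side / 2) ^ (-n)) * μ (Q.dilate (α ^ N)).toSet := by
  have side_pos (k : ℕ) : 0 < (Q.dilate (α ^ k)).side := mul_pos (pow_pos hα k) hQ
  have dilate_succ (k : ℕ) : (Q.dilate (α ^ k)).dilate α = Q.dilate (α ^ (k + 1)) := by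
    rw [Cube.dilate_dilate, pow_succ']
  have h := setLIntegral_diff_le_of_geometric_growth (μ := μ) (N := N)
    (f := fun x ↦ ENNReal.ofReal (‖x - Q.center‖ ^ (-n)))
    (A := fun k ↦ (Q.dilate (α ^ k)).toSet)
    (a := fun k ↦ ENNReal.ofReal (((Q.dilate (α ^ k)).side / 2) ^ (-n)))
    (γ := ENNReal.ofReal (α ^ n)) (b := (ENNReal.ofReal β)⁻¹)
    (fun k _ x hx ↦ ENNReal.ofReal_le_ofReal (Cube.norm_sub_rpow_neg_le hn (side_pos k) hx.2))
    (fun k _ ↦ by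
      rw [← ENNReal.ofReal_mul (by positivity), ← dilate_succ,
        ← Cube.half_side_rpow_neg_eq (side_pos k).le hα])
    (fun k hk ↦ by
      simpa only [dilate_succ] using measure_toSet_le_of_not_isDoublingWith hβ (hgap k hk))
  simpa only [pow_zero, Cube.dilate_one] using h

lemma GrowthCond.setLIntegral_dilate_pow_diff_le (hμ : GrowthCond μ C₀ n) (hn : 0 ≤ n)
    (hα : 0 < α) (hβ : 0 < β) (hQ : IsCube μ Q) {N : ℕ}
    (hgap : ∀ k < N, ¬ IsDoublingWith μ α β (Q.dilate (α ^ k))) :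
    ∫⁻ x in (Q.dilate (α ^ N)).toSet \ Q.toSet, ENNReal.ofReal (‖x - Q.center‖ ^ (-n)) ∂μ ≤
      gapConst d C₀ n α β := by
  refine (setLIntegral_dilate_pow_diff_le_mul_measure hn hα hβ hQ.2 hgap).trans ?_
  rw [gapConst, mul_assoc]
  gcongr
  exact hμ.rpow_neg_mul_measure_toSet_le (hQ.dilate (pow_pos hα N))

lemma GrowthCond.setLIntegral_diff_le_of_no_doubling_between (hμ : GrowthCond μ C₀ n) (hn : 0 ≤ n)
    (hα : 1 < α) (hβ : 0 < β) (hQ : IsCube μ Q) (hc : Q.center = R.center)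
    (hgap : ∀ k : ℕ, Q.toSet ⊆ (Q.dilate (α ^ k)).toSet → (Q.dilate (α ^ k)).toSet ⊆ R.toSet →
      ¬ IsDoublingWith μ α β (Q.dilate (α ^ k))) :
    ∫⁻ x in R.toSet \ Q.toSet, ENNReal.ofReal (‖x - Q.center‖ ^ (-n)) ∂μ ≤
      gapConst d C₀ n α β := by
  rcases le_total R.side Q.side with hRQ | hQR
  · simp [sdiff_eq_bot_iff.2 (Cube.toSet_subset_toSet hc.symm hRQ)]
  obtain ⟨N, hNR, hRN⟩ := Cube.exists_dilate_pow_subset_subset hα hQ.2 hc hQR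
  have hN : ∀ k < N + 1, ¬ IsDoublingWith μ α β (Q.dilate (α ^ k)) := fun k hk ↦
    hgap k (Cube.toSet_subset_toSet_dilate hQ.2.le (one_le_pow₀ hα.le))
      (hNR k (Nat.lt_succ_iff.1 hk))
  exact (lintegral_mono_set (sdiff_subset_sdiff_left hRN)).trans
    (hμ.setLIntegral_dilate_pow_diff_le hn (zero_lt_one.trans hα) hβ hQ hN)

end Measure

lemma two_rpow_lt_two_pow_succ {n : ℝ} (hnd : n < d + 1) : (2 : ℝ) ^ n < 2 ^ (d + 1) := by
  rw [← Real.rpow_natCast]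
  exact Real.rpow_lt_rpow_of_exponent_lt one_lt_two (by exact_mod_cast hnd)

theorem cdelta_le_of_no_doubling_between_general (C₀ : ℝ) {n α β : ℝ} (hn : 0 ≤ n) (hα : 1 < α)
    (hαβ : α ^ n < β) :
    ∃ C₅ : ℝ, ∀ μ : Measure (Euc d), GrowthCond μ C₀ n →
      ∀ Q R : Cube d, IsCube μ Q → Q.center = R.center → Q.toSet ⊆ R.toSet →
      (∀ k : ℕ, Q.toSet ⊆ (Q.dilate (α ^ k)).toSet → (Q.dilate (α ^ k)).toSet ⊆ R.toSet →
        ¬ IsDoublingWith μ α β (Q.dilate (α ^ k))) →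
      cdelta μ n Q R ≤ C₅ := by
  have hβ : 0 < β := (by positivity : 0 < α ^ n).trans hαβ
  refine ⟨(gapConst d C₀ n α β).toReal, fun μ hμ Q R hQ hc hQR hgap ↦ ?_⟩
  rw [cdelta_eq_setIntegral_diff hc hQR, integral_eq_lintegral_of_nonneg_ae
    (Eventually.of_forall fun x ↦ by positivity)
    (Measurable.aestronglyMeasurable (by fun_prop))]
  exact ENNReal.toReal_mono (gapConst_ne_top hβ hαβ)
    (hμ.setLIntegral_diff_le_of_no_doubling_between hn hα hβ hQ hc hgap)

/-- If `Q ⊂ R` are concentric cubes with no doubling cube of the form `2^k Q`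
between them, then `δ(Q,R) ≤ C₅`. -/
theorem cdelta_le_of_no_doubling_between {d : ℕ} (n C₀ : ℝ) (hn : 0 < n) (hnd : n ≤ d) :
    ∃ C₅ : ℝ, ∀ (μ : Measure (Euc d)) [IsLocallyFiniteMeasure μ], GrowthCond μ C₀ n →
      ∀ Q R : Cube d, IsCube μ Q → IsCube μ R →
      Q.center = R.center → Q.toSet ⊆ R.toSet →
      (∀ j : ℕ, Q.toSet ⊆ (Q.dilate (2 ^ j)).toSet → (Q.dilate (2 ^ j)).toSet ⊆ R.toSet →
        ¬ IsDoubling μ (Q.dilate (2 ^ j))) →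
      cdelta μ n Q R ≤ C₅ := by
  obtain ⟨C₅, hC₅⟩ := cdelta_le_of_no_doubling_between_general (d := d) C₀ hn.le one_lt_two
    (two_rpow_lt_two_pow_succ (hnd.trans_lt (lt_add_one _)))
  exact ⟨C₅, fun μ _ hμ Q R hQ _ hc hQR hgap ↦ hC₅ μ hμ Q R hQ hc hQR
    (by simpa only [isDoublingWith_two_iff] using hgap)⟩
end
end

section
/- There is a constant C depending only on C₀, n and d such that for all cubes Q ⊂ R, δ(Q,R) ≤ C (1 + log(ℓ(R)/ℓ(Q))). -/
open MeasureTheory Metric Set Filter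
open scoped ENNReal NNReal

noncomputable section

variable {d : ℕ}

/-!
Cut the annulus `a ≤ |x - z| ≤ b` into the dyadic annuli `2ᵏa ≤ |x - z| < 2ᵏ⁺¹a`. Each of them
has measure at most `C₀ (2ᵏ⁺¹a)ⁿ`, while `|x - z|⁻ⁿ ≤ (2ᵏa)⁻ⁿ` on it, so it contributes at most
`C₀ 2ⁿ` to the integral of `|x - z|⁻ⁿ`; at most `1 + log₂ (b / a)` of them are needed. If `Q ⊂ R`
then `R_Q = R`, so the second integral in `δ(Q,R)` is over the empty set, and `Q_R ∖ Q` lies in the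
annulus around `z_Q` with radii `ℓ(Q) / 2` and `√d ℓ(R)`.
-/

/-- The growth condition `μ(B(z,r)) ≤ C rⁿ` at a single point `z` of a metric space; `GrowthCond`
asks for it at every point of the support. -/
def GrowthAt {X : Type*} [PseudoMetricSpace X] [MeasurableSpace X] (μ : Measure X) (C n : ℝ)
    (z : X) : Prop :=
  ∀ r : ℝ, 0 < r → μ (ball z r) ≤ ENNReal.ofReal (C * r ^ n)

namespace GrowthAt

variable {X : Type*} [PseudoMetricSpace X] [MeasurableSpace X] [OpensMeasurableSpace X]
  {μ : Measure X} {C n : ℝ} {z : X}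

lemma lintegral_dist_rpow_neg_ball_two_mul_diff_le (hμ : GrowthAt μ C n z) (hn : 0 ≤ n)
    {r : ℝ} (hr : 0 < r) :
    ∫⁻ x in ball z (2 * r) \ ball z r, ENNReal.ofReal (dist x z ^ (-n)) ∂μ ≤
      ENNReal.ofReal (C * 2 ^ n) := by
  have dist_rpow_le : ∀ x ∈ ball z (2 * r) \ ball z r,
      ENNReal.ofReal (dist x z ^ (-n)) ≤ ENNReal.ofReal (r ^ (-n)) := fun x hx =>
    ENNReal.ofReal_le_ofReal <|
      Real.rpow_le_rpow_of_nonpos hr (not_lt.1 hx.2) (neg_nonpos.2 hn)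
  calc ∫⁻ x in ball z (2 * r) \ ball z r, ENNReal.ofReal (dist x z ^ (-n)) ∂μ
      ≤ ∫⁻ _ in ball z (2 * r) \ ball z r, ENNReal.ofReal (r ^ (-n)) ∂μ :=
        setLIntegral_mono' (measurableSet_ball.diff measurableSet_ball) dist_rpow_le
    _ = ENNReal.ofReal (r ^ (-n)) * μ (ball z (2 * r) \ ball z r) := setLIntegral_const _ _
    _ ≤ ENNReal.ofReal (r ^ (-n)) * ENNReal.ofReal (C * (2 * r) ^ n) := by
        gcongr
        exact (measure_mono sdiff_subset).trans (hμ _ (by positivity))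
    _ = ENNReal.ofReal (C * 2 ^ n) := by
        rw [← ENNReal.ofReal_mul (by positivity), Real.mul_rpow zero_le_two hr.le,
          Real.rpow_neg hr.le]
        congr 1
        field_simp

lemma lintegral_dist_rpow_neg_ball_two_pow_mul_diff_le (hμ : GrowthAt μ C n z) (hn : 0 ≤ n)
    {a : ℝ} (ha : 0 < a) (N : ℕ) :
    ∫⁻ x in ball z (2 ^ N * a) \ ball z a, ENNReal.ofReal (dist x z ^ (-n)) ∂μ ≤
      N * ENNReal.ofReal (C * 2 ^ n) := by
  induction N with
  | zero => simp
  | succ N ih =>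
    have split_last : ball z (2 ^ (N + 1) * a) \ ball z a ⊆
        (ball z (2 * (2 ^ N * a)) \ ball z (2 ^ N * a)) ∪ (ball z (2 ^ N * a) \ ball z a) := by
      rw [pow_succ', mul_assoc]
      exact sdiff_triangle _ _ _
    calc ∫⁻ x in ball z (2 ^ (N + 1) * a) \ ball z a, ENNReal.ofReal (dist x z ^ (-n)) ∂μ
        ≤ _ := (lintegral_mono_set split_last).trans (lintegral_union_le _ _ _)
      _ ≤ ENNReal.ofReal (C * 2 ^ n) + N * ENNReal.ofReal (C * 2 ^ n) :=
          add_le_add (hμ.lintegral_dist_rpow_neg_ball_two_mul_diff_le hn (by positivity)) ih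
      _ = (N + 1 : ℕ) * ENNReal.ofReal (C * 2 ^ n) := by push_cast; ring

theorem setIntegral_dist_rpow_neg_le (hμ : GrowthAt μ C n z) (hn : 0 ≤ n) {a b : ℝ} (ha : 0 < a)
    (hab : a ≤ b) {s : Set X} (hs : s ⊆ closedBall z b \ ball z a) :
    ∫ x in s, dist x z ^ (-n) ∂μ ≤ (1 + Real.logb 2 (b / a)) * max (C * 2 ^ n) 0 := by
  obtain ⟨k, pow_le, lt_pow_succ⟩ := exists_nat_pow_near ((one_le_div ha).2 hab) one_lt_two
  have s_subset : s ⊆ ball z (2 ^ (k + 1) * a) \ ball z a :=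
    hs.trans <| sdiff_subset_sdiff_left <| closedBall_subset_ball <| (div_lt_iff₀ ha).1 lt_pow_succ
  have k_le : (k : ℝ) ≤ Real.logb 2 (b / a) := by
    rwa [Real.le_logb_iff_rpow_le one_lt_two (div_pos (ha.trans_le hab) ha), Real.rpow_natCast]
  have lintegral_le : ∫⁻ x in s, ENNReal.ofReal (dist x z ^ (-n)) ∂μ ≤
      (k + 1 : ℕ) * ENNReal.ofReal (C * 2 ^ n) :=
    (lintegral_mono_set s_subset).trans
      (hμ.lintegral_dist_rpow_neg_ball_two_pow_mul_diff_le hn ha (k + 1))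
  have measurable_dist_rpow : Measurable fun x => dist x z ^ (-n) :=
    (continuous_id.dist continuous_const).measurable.pow_const _
  calc ∫ x in s, dist x z ^ (-n) ∂μ
      = (∫⁻ x in s, ENNReal.ofReal (dist x z ^ (-n)) ∂μ).toReal :=
        integral_eq_lintegral_of_nonneg_ae (Eventually.of_forall fun _ => by positivity)
          measurable_dist_rpow.aestronglyMeasurable
    _ ≤ ((k + 1 : ℕ) * ENNReal.ofReal (C * 2 ^ n)).toReal :=
        ENNReal.toReal_mono
          (ENNReal.mul_ne_top (ENNReal.natCast_ne_top _) ENNReal.ofReal_ne_top) lintegral_le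
    _ = (1 + k) * max (C * 2 ^ n) 0 := by
        rw [ENNReal.toReal_mul, ENNReal.toReal_natCast, ENNReal.toReal_ofReal', Nat.cast_succ,
          add_comm]
    _ ≤ (1 + Real.logb 2 (b / a)) * max (C * 2 ^ n) 0 := by gcongr

end GrowthAt

namespace Cube

lemma ball_subset_toSet (Q : Cube d) : ball Q.center (Q.side / 2) ⊆ Q.toSet := fun x hx i =>
  (PiLp.norm_apply_le (x - Q.center) i).trans (mem_ball_iff_norm.1 hx).le

lemma toSet_subset_closedBall {Q : Cube d} (hQ : 0 ≤ Q.side) :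
    Q.toSet ⊆ closedBall Q.center (√d * (Q.side / 2)) := by
  intro x hx
  rw [mem_closedBall, EuclideanSpace.dist_eq]
  calc √(∑ i, dist (x i) (Q.center i) ^ 2)
      ≤ √(∑ _ : Fin d, (Q.side / 2) ^ 2) := by
        gcongr with i
        exact hx i
    _ = √d * (Q.side / 2) := by
        rw [Finset.sum_const, Finset.card_fin, nsmul_eq_mul, Real.sqrt_mul (Nat.cast_nonneg d),
          Real.sqrt_sq (by positivity)]

lemma center_add_single_mem_toSet (Q : Cube d) (i : Fin d) {t : ℝ} (ht : |t| ≤ Q.side / 2) :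
    Q.center + EuclideanSpace.single i t ∈ Q.toSet := by
  intro j
  obtain rfl | hj := eq_or_ne j i
  · simpa using ht
  · simpa [hj] using (abs_nonneg t).trans ht

variable {Q R : Cube d}

lemma two_mul_abs_center_sub_center_add_side_le (hQ : 0 ≤ Q.side) (hQR : Q.toSet ⊆ R.toSet)
    (i : Fin d) : 2 * |Q.center i - R.center i| + Q.side ≤ R.side := by
  have abs_half_side : |Q.side / 2| = Q.side / 2 := abs_of_nonneg (by positivity)
  have right_face : |Q.center i + Q.side / 2 - R.center i| ≤ R.side / 2 := by
    simpa using hQR (Q.center_add_single_mem_toSet i abs_half_side.le) i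
  have left_face : |Q.center i + -(Q.side / 2) - R.center i| ≤ R.side / 2 := by
    simpa using hQR (Q.center_add_single_mem_toSet i ((abs_neg _).trans abs_half_side).le) i
  have abs_center_sub_center_le : |Q.center i - R.center i| ≤ (R.side - Q.side) / 2 :=
    abs_le.2 ⟨by linarith [(abs_le.1 left_face).1], by linarith [(abs_le.1 right_face).2]⟩
  linarith

variable [NeZero d]

lemma side_le_side_of_subset (hQ : 0 ≤ Q.side) (hQR : Q.toSet ⊆ R.toSet) : Q.side ≤ R.side := by
  linarith [two_mul_abs_center_sub_center_add_side_le hQ hQR 0,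
    abs_nonneg (Q.center 0 - R.center 0)]

lemma encl_eq_self_of_subset (hQ : 0 ≤ Q.side) (hQR : Q.toSet ⊆ R.toSet) : R.encl Q = R := by
  have iSup_le_side : ⨆ i, 2 * |Q.center i - R.center i| + Q.side ≤ R.side :=
    ciSup_le (two_mul_abs_center_sub_center_add_side_le hQ hQR)
  rw [encl, max_eq_left iSup_le_side]

lemma side_encl_le_two_mul_side (hQ : 0 ≤ Q.side) (hQR : Q.toSet ⊆ R.toSet) :
    (Q.encl R).side ≤ 2 * R.side := by
  have side_le := side_le_side_of_subset hQ hQR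
  refine max_le (by linarith) (ciSup_le fun i => ?_)
  rw [abs_sub_comm]
  linarith [two_mul_abs_center_sub_center_add_side_le hQ hQR i]

lemma encl_diff_subset_annulus (hQ : 0 ≤ Q.side) (hQR : Q.toSet ⊆ R.toSet) :
    (Q.encl R).toSet \ Q.toSet ⊆
      closedBall Q.center (√d * R.side) \ ball Q.center (Q.side / 2) := by
  have half_side_le : (Q.encl R).side / 2 ≤ R.side := by
    linarith [side_encl_le_two_mul_side hQ hQR]
  calc (Q.encl R).toSet \ Q.toSet
      ⊆ closedBall Q.center (√d * ((Q.encl R).side / 2)) \ ball Q.center (Q.side / 2) :=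
        sdiff_subset_sdiff (toSet_subset_closedBall (hQ.trans (le_max_left _ _)))
          Q.ball_subset_toSet
    _ ⊆ closedBall Q.center (√d * R.side) \ ball Q.center (Q.side / 2) :=
        sdiff_subset_sdiff_left <| closedBall_subset_closedBall <| by gcongr

end Cube

lemma cdelta_eq_setIntegral_of_subset [NeZero d] (μ : Measure (Euc d)) (n : ℝ) {Q R : Cube d}
    (hQ : 0 ≤ Q.side) (hQR : Q.toSet ⊆ R.toSet) :
    cdelta μ n Q R = ∫ x in (Q.encl R).toSet \ Q.toSet, dist x Q.center ^ (-n) ∂μ := by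
  simp only [cdelta, Cube.encl_eq_self_of_subset hQ hQR, sdiff_self,
    setIntegral_empty, dist_eq_norm]
  exact max_eq_left (integral_nonneg fun _ => by positivity)

lemma one_add_logb_two_mul_mul_le {c t : ℝ} (hc : 1 ≤ c) (ht : 1 ≤ t) :
    1 + Real.logb 2 (2 * c * t) ≤ (2 + Real.logb 2 c) * (1 + Real.log t) := by
  have logb_c_nonneg : 0 ≤ Real.logb 2 c := Real.logb_nonneg one_lt_two hc
  have log_t_nonneg : 0 ≤ Real.log t := Real.log_nonneg ht
  have logb_t_le : Real.logb 2 t ≤ 2 * Real.log t := by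
    rw [Real.logb, div_le_iff₀ (Real.log_pos one_lt_two)]
    nlinarith [Real.log_two_gt_d9]
  calc 1 + Real.logb 2 (2 * c * t)
      = 2 + Real.logb 2 c + Real.logb 2 t := by
        rw [Real.logb_mul (by positivity) (by positivity),
          Real.logb_mul two_ne_zero (by positivity), Real.logb_self_eq_one one_lt_two]
        ring
    _ ≤ (2 + Real.logb 2 c) * (1 + Real.log t) := by
        nlinarith [mul_nonneg logb_c_nonneg log_t_nonneg]

theorem cdelta_le_log_general [NeZero d] {μ : Measure (Euc d)} {n C₀ : ℝ} (hn : 0 ≤ n)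
    {Q R : Cube d} (hμ : GrowthAt μ C₀ n Q.center) (hQ : 0 < Q.side) (hQR : Q.toSet ⊆ R.toSet) :
    cdelta μ n Q R ≤
      max (C₀ * 2 ^ n) 0 * (2 + Real.logb 2 √d) * (1 + Real.log (R.side / Q.side)) := by
  have side_le : Q.side ≤ R.side := Cube.side_le_side_of_subset hQ.le hQR
  have one_le_sqrt : 1 ≤ √(d : ℝ) := Real.one_le_sqrt.2 (Nat.one_le_cast.2 NeZero.one_le)
  have radii_le : Q.side / 2 ≤ √d * R.side := by nlinarith
  have radii_ratio : √d * R.side / (Q.side / 2) = 2 * √d * (R.side / Q.side) := by ring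
  calc cdelta μ n Q R
      = ∫ x in (Q.encl R).toSet \ Q.toSet, dist x Q.center ^ (-n) ∂μ :=
        cdelta_eq_setIntegral_of_subset μ n hQ.le hQR
    _ ≤ (1 + Real.logb 2 (2 * √d * (R.side / Q.side))) * max (C₀ * 2 ^ n) 0 :=
        radii_ratio ▸ hμ.setIntegral_dist_rpow_neg_le hn (half_pos hQ) radii_le
          (Cube.encl_diff_subset_annulus hQ.le hQR)
    _ ≤ (2 + Real.logb 2 √d) * (1 + Real.log (R.side / Q.side)) * max (C₀ * 2 ^ n) 0 := by
        gcongr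
        exact one_add_logb_two_mul_mul_le one_le_sqrt ((one_le_div hQ).2 side_le)
    _ = _ := by ring

/-- For cubes `Q ⊂ R`, `δ(Q,R) ≤ C (1 + log(ℓ(R)/ℓ(Q)))`. -/
theorem cdelta_le_log {d : ℕ} (n C₀ : ℝ) (hn : 0 < n) (hnd : n ≤ d) :
    ∃ C : ℝ, ∀ (μ : Measure (Euc d)) [IsLocallyFiniteMeasure μ], GrowthCond μ C₀ n →
      ∀ Q R : Cube d, IsCube μ Q → IsCube μ R → Q.toSet ⊆ R.toSet →
      cdelta μ n Q R ≤ C * (1 + Real.log (R.side / Q.side)) := by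
  have : NeZero d := ⟨Nat.cast_ne_zero.1 (hn.trans_le hnd).ne'⟩
  exact ⟨_, fun μ _ hμ Q R hQ _ hQR => cdelta_le_log_general hn.le (hμ Q.center hQ.1) hQ.2 hQR⟩
end
end

section
/- There is a constant ε₀ depending only on C₀, n and d such that for all cubes P ⊂ Q ⊂ R, |δ(P,R) − (δ(P,Q) + δ(Q,R))| ≤ ε₀. Moreover, if P and Q are concentric, then δ(P,R) = δ(P,Q) + δ(Q,R) exactly. -/
open MeasureTheory Metric Set Filter
open scoped ENNReal NNReal

noncomputable section

variable {d : ℕ}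

/-!
Since `Q_P = Q` when `P ⊂ Q`, the maximum in `δ(P,Q)` is the integral over `P_Q \ P` of the kernel
centered at `P`. Additivity of the integral gives
`δ(P,R) = δ(P,Q) + ∫_{P_R \ P_Q} |x - z_P|^{-n} dμ`, so the error is the difference of the integrals
of `|x - z_P|^{-n}` over `P_R \ P_Q` and of `|x - z_Q|^{-n}` over `Q_R \ Q`. These coincide when `P`
and `Q` are concentric. In general:
* on the intersection of the two regions, the kernels differ by `O(ℓ(Q) |x - z_Q|^{-n-1})`, which a
  dyadic decomposition integrates to `O(1)`;
* on the symmetric difference, the kernel concerned is comparable to `ℓ(R)^{-n}` (or to `ℓ(Q)^{-n}`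
  on `P_Q \ Q`) on a set of diameter `O(ℓ(R))` (resp. `O(ℓ(Q))`), so growth again gives `O(1)`.
-/

section RadialKernel

lemma setIntegral_sub_setIntegral_eq {X E : Type*} [MeasurableSpace X] [NormedAddCommGroup E]
    [NormedSpace ℝ E] {μ : Measure X} {f g : X → E} {A B : Set X} (hA : MeasurableSet A)
    (hB : MeasurableSet B) (hf : IntegrableOn f A μ) (hg : IntegrableOn g B μ) :
    ∫ x in A, f x ∂μ - ∫ x in B, g x ∂μ =
      ∫ x in A ∩ B, (f x - g x) ∂μ + ∫ x in A \ B, f x ∂μ - ∫ x in B \ A, g x ∂μ := by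
  rw [integral_sub (hf.mono_set inter_subset_left) (hg.mono_set inter_subset_right),
    ← integral_inter_add_sdiff hB hf, ← integral_inter_add_sdiff hA hg, inter_comm B A]
  abel

lemma abs_rpow_neg_sub_rpow_neg_le {p a u v : ℝ} (hp : 0 ≤ p) (ha : 0 < a) (hu : a ≤ u)
    (hv : a ≤ v) : |u ^ (-p) - v ^ (-p)| ≤ p * a ^ (-(p + 1)) * |u - v| := by
  have hderiv : ∀ t ∈ Ici a, HasDerivWithinAt (fun t ↦ t ^ (-p)) (-p * t ^ (-p - 1)) (Ici a) t :=
    fun t ht ↦ (Real.hasDerivAt_rpow_const (Or.inl (ha.trans_le ht).ne')).hasDerivWithinAt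
  refine (convex_Ici a).norm_image_sub_le_of_norm_hasDerivWithin_le hderiv (fun t ht ↦ ?_) hv hu
  have ht₀ : 0 < t := ha.trans_le ht
  rw [norm_mul, norm_neg, Real.norm_of_nonneg hp, Real.norm_of_nonneg (by positivity), ← neg_add']
  gcongr p * ?_
  exact Real.rpow_le_rpow_of_nonpos ha ht (by linarith)

variable {X : Type*} [PseudoMetricSpace X] {x y z w : X} {S : Set X}

lemma dist_le_one_add_mul_dist {K s : ℝ} (hK : 0 ≤ K) (hyz : dist y z ≤ K * s)
    (hxy : s ≤ dist x y) : dist x z ≤ (1 + K) * dist x y := by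
  calc dist x z ≤ dist x y + dist y z := dist_triangle x y z
    _ ≤ dist x y + K * dist x y := by gcongr; exact hyz.trans (by gcongr)
    _ = (1 + K) * dist x y := by ring

lemma abs_rpow_neg_dist_sub_le {p M : ℝ} (hp : 0 ≤ p) (hM : 1 ≤ M) (hxz : 0 < dist x z)
    (hle : dist x z ≤ M * dist x w) :
    |dist x w ^ (-p) - dist x z ^ (-p)| ≤
      p * M ^ (p + 1) * dist w z * dist x z ^ (-(p + 1)) := by
  have hM₀ : 0 < M := by positivity
  calc |dist x w ^ (-p) - dist x z ^ (-p)|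
    _ ≤ p * (dist x z / M) ^ (-(p + 1)) * |dist x w - dist x z| :=
      abs_rpow_neg_sub_rpow_neg_le hp (by positivity) ((div_le_iff₀' hM₀).2 hle)
        (div_le_self hxz.le hM)
    _ ≤ p * (dist x z / M) ^ (-(p + 1)) * dist w z := by
      gcongr
      rw [dist_comm x w, dist_comm x z, dist_comm w z]
      exact (abs_dist_sub_le w z x).trans_eq (dist_comm w z)
    _ = p * M ^ (p + 1) * dist w z * dist x z ^ (-(p + 1)) := by
      rw [Real.div_rpow hxz.le hM₀.le, Real.rpow_neg hM₀.le, div_inv_eq_mul]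
      ring

variable [MeasurableSpace X] {μ : Measure X}

lemma integrableOn_rpow_neg_dist [OpensMeasurableSpace X] {p a : ℝ} (hp : 0 ≤ p) (ha : 0 < a)
    (hS : MeasurableSet S) (hμS : μ S ≠ ∞) (haS : ∀ x ∈ S, a ≤ dist x z) :
    IntegrableOn (fun x ↦ dist x z ^ (-p)) S μ := by
  refine Measure.integrableOn_of_bounded (M := a ^ (-p)) hμS
    ((continuous_id.dist continuous_const).measurable.pow_const _).aestronglyMeasurable ?_
  filter_upwards [ae_restrict_mem hS] with x hx
  rw [Real.norm_of_nonneg (by positivity)]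
  exact Real.rpow_le_rpow_of_nonpos ha (haS x hx) (by linarith)

lemma setLIntegral_rpow_neg_dist_le {p a b : ℝ} (hp : 0 ≤ p) (ha : 0 < a)
    (hS : ∀ x ∈ S, a ≤ dist x z ∧ dist x z < b) :
    ∫⁻ x in S, ENNReal.ofReal (dist x z ^ (-p)) ∂μ ≤
      ENNReal.ofReal (a ^ (-p)) * μ (ball z b) :=
  calc ∫⁻ x in S, ENNReal.ofReal (dist x z ^ (-p)) ∂μ
    _ ≤ ∫⁻ _ in S, ENNReal.ofReal (a ^ (-p)) ∂μ :=
      setLIntegral_mono measurable_const fun x hx ↦ ENNReal.ofReal_le_ofReal <|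
        Real.rpow_le_rpow_of_nonpos ha (hS x hx).1 (by linarith)
    _ = ENNReal.ofReal (a ^ (-p)) * μ S := setLIntegral_const _ _
    _ ≤ ENNReal.ofReal (a ^ (-p)) * μ (ball z b) := by
      gcongr
      exact fun x hx ↦ (hS x hx).2

lemma setIntegral_rpow_neg_dist_le_of_growth {n C a b : ℝ} (hn : 0 ≤ n) (hC : 0 ≤ C) (ha : 0 < a)
    (hb : 0 < b) (hμ : ∀ r > 0, μ (ball z r) ≤ ENNReal.ofReal (C * r ^ n))
    (hS : ∀ x ∈ S, a ≤ dist x z ∧ dist x z < b) :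
    ∫ x in S, dist x z ^ (-n) ∂μ ≤ C * (b / a) ^ n := by
  have hlintegral : ∫⁻ x in S, ENNReal.ofReal ‖dist x z ^ (-n)‖ ∂μ ≤
      ENNReal.ofReal (C * (b / a) ^ n) := by
    simp only [Real.norm_of_nonneg (Real.rpow_nonneg dist_nonneg _)]
    calc ∫⁻ x in S, ENNReal.ofReal (dist x z ^ (-n)) ∂μ
      _ ≤ ENNReal.ofReal (a ^ (-n)) * μ (ball z b) := setLIntegral_rpow_neg_dist_le hn ha hS
      _ ≤ ENNReal.ofReal (a ^ (-n)) * ENNReal.ofReal (C * b ^ n) := by gcongr; exact hμ b hb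
      _ = ENNReal.ofReal (C * (b / a) ^ n) := by
        rw [← ENNReal.ofReal_mul (by positivity), Real.div_rpow hb.le ha.le, Real.rpow_neg ha.le]
        ring_nf
  exact (le_abs_self _).trans <| (norm_integral_le_lintegral_norm _).trans <|
    ENNReal.toReal_le_of_le_ofReal (by positivity) hlintegral

lemma setLIntegral_rpow_neg_dist_le_of_growth {n ε C s : ℝ} (hnε : 0 ≤ n + ε) (hε : 0 < ε)
    (hC : 0 ≤ C) (hs : 0 < s) (hμ : ∀ r > 0, μ (ball z r) ≤ ENNReal.ofReal (C * r ^ n)) :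
    ∫⁻ x in {x | s ≤ dist x z}, ENNReal.ofReal (dist x z ^ (-(n + ε))) ∂μ ≤
      ENNReal.ofReal (C * 2 ^ n * s ^ (-ε) * (1 - 2 ^ (-ε))⁻¹) := by
  let shell (k : ℕ) : Set X := {x | 2 ^ k * s ≤ dist x z ∧ dist x z < 2 ^ (k + 1) * s}
  have hcover : {x | s ≤ dist x z} ⊆ ⋃ k, shell k := by
    intro x (hx : s ≤ dist x z)
    obtain ⟨k, hk⟩ := exists_nat_pow_near ((one_le_div₀ hs).2 hx) one_lt_two
    rw [le_div_iff₀ hs, div_lt_iff₀ hs] at hk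
    exact mem_iUnion.2 ⟨k, hk⟩
  have hshell (k : ℕ) : ∫⁻ x in shell k, ENNReal.ofReal (dist x z ^ (-(n + ε))) ∂μ ≤
      ENNReal.ofReal (C * 2 ^ n * s ^ (-ε) * (2 ^ (-ε)) ^ k) := by
    refine (setLIntegral_rpow_neg_dist_le hnε (by positivity) fun x hx ↦ hx).trans ?_
    refine (mul_le_mul_right (hμ _ (by positivity)) _).trans_eq ?_
    rw [← ENNReal.ofReal_mul (by positivity)]
    congr 1
    have hdouble : (2 : ℝ) ^ (k + 1) * s = 2 * (2 ^ k * s) := by ring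
    rw [hdouble, Real.mul_rpow zero_le_two (by positivity), neg_add,
      Real.rpow_add (by positivity), Real.rpow_neg (by positivity) n,
      Real.mul_rpow (z := -ε) (by positivity) hs.le, ← Real.rpow_pow_comm zero_le_two]
    field_simp
  have hlt : (2 : ℝ) ^ (-ε) < 1 := Real.rpow_lt_one_of_one_lt_of_neg one_lt_two (by linarith)
  have hsummable : Summable fun k : ℕ ↦ ((2 : ℝ) ^ (-ε)) ^ k :=
    summable_geometric_of_lt_one (by positivity) hlt
  calc ∫⁻ x in {x | s ≤ dist x z}, ENNReal.ofReal (dist x z ^ (-(n + ε))) ∂μ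
    _ ≤ ∑' k, ∫⁻ x in shell k, ENNReal.ofReal (dist x z ^ (-(n + ε))) ∂μ :=
      (lintegral_mono_set hcover).trans (lintegral_iUnion_le _ _)
    _ ≤ ∑' k : ℕ, ENNReal.ofReal (C * 2 ^ n * s ^ (-ε) * (2 ^ (-ε)) ^ k) :=
      ENNReal.tsum_le_tsum hshell
    _ = ENNReal.ofReal (C * 2 ^ n * s ^ (-ε) * (1 - 2 ^ (-ε))⁻¹) := by
      rw [← ENNReal.ofReal_tsum_of_nonneg (fun k ↦ by positivity) (hsummable.mul_left _),
        tsum_mul_left, tsum_geometric_of_lt_one (by positivity) hlt]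

lemma abs_setIntegral_rpow_neg_dist_sub_le [OpensMeasurableSpace X] {n C M s : ℝ} (hn : 0 ≤ n)
    (hC : 0 ≤ C) (hM : 1 ≤ M) (hs : 0 < s)
    (hμ : ∀ r > 0, μ (ball z r) ≤ ENNReal.ofReal (C * r ^ n))
    (hS : ∀ x ∈ S, s ≤ dist x z ∧ dist x z ≤ M * dist x w) :
    |∫ x in S, (dist x w ^ (-n) - dist x z ^ (-n)) ∂μ| ≤
      C * (2 * n * 2 ^ n * M ^ (n + 1)) * (dist w z / s) := by
  set c := n * M ^ (n + 1) * dist w z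
  have hmeas (c : ℝ) : Measurable fun x ↦ ENNReal.ofReal (c * dist x z ^ (-(n + 1))) :=
    (((continuous_id.dist continuous_const).measurable.pow_const _).const_mul c).ennreal_ofReal
  rw [← Real.norm_eq_abs]
  refine (norm_integral_le_lintegral_norm _).trans
    (ENNReal.toReal_le_of_le_ofReal (by positivity) ?_)
  calc ∫⁻ x in S, ENNReal.ofReal ‖dist x w ^ (-n) - dist x z ^ (-n)‖ ∂μ
    _ ≤ ∫⁻ x in S, ENNReal.ofReal (c * dist x z ^ (-(n + 1))) ∂μ :=
      setLIntegral_mono (hmeas c) fun x hx ↦ ENNReal.ofReal_le_ofReal <|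
        abs_rpow_neg_dist_sub_le hn hM (hs.trans_le (hS x hx).1) (hS x hx).2
    _ ≤ ∫⁻ x in {x | s ≤ dist x z}, ENNReal.ofReal (c * dist x z ^ (-(n + 1))) ∂μ :=
      lintegral_mono_set fun x hx ↦ (hS x hx).1
    _ = ENNReal.ofReal c *
          ∫⁻ x in {x | s ≤ dist x z}, ENNReal.ofReal (dist x z ^ (-(n + 1))) ∂μ := by
      rw [← lintegral_const_mul _ (by simpa using hmeas 1)]
      simp only [ENNReal.ofReal_mul (show 0 ≤ c by positivity)]
    _ ≤ ENNReal.ofReal c *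
          ENNReal.ofReal (C * 2 ^ n * s ^ (-1 : ℝ) * (1 - 2 ^ (-1 : ℝ))⁻¹) := by
      gcongr
      exact setLIntegral_rpow_neg_dist_le_of_growth (by positivity) one_pos hC hs hμ
    _ = ENNReal.ofReal (C * (2 * n * 2 ^ n * M ^ (n + 1)) * (dist w z / s)) := by
      rw [← ENNReal.ofReal_mul (by positivity), Real.rpow_neg_one, Real.rpow_neg_one]
      congr 1
      ring

end RadialKernel

namespace Cube

variable {P Q R S : Cube d} {x : Euc d}

lemma center_mem_toSet (hQ : 0 ≤ Q.side) : Q.center ∈ Q.toSet := fun i ↦ by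
  simpa using div_nonneg hQ zero_le_two

lemma toSet_subset_toSet_iff (hP : 0 ≤ P.side) :
    P.toSet ⊆ Q.toSet ↔ ∀ i, 2 * |P.center i - Q.center i| + P.side ≤ Q.side := by
  constructor
  · intro hPQ i
    have hface (t : ℝ) (ht : |t| ≤ P.side / 2) : |P.center i + t - Q.center i| ≤ Q.side / 2 := by
      have hmem : P.center + EuclideanSpace.single i t ∈ P.toSet := fun j ↦ by
        obtain rfl | hji := eq_or_ne j i
        · simpa using ht
        · simpa [hji] using div_nonneg hP zero_le_two
      simpa using hPQ hmem i
    have hhalf : |P.side / 2| ≤ P.side / 2 := (abs_of_nonneg (by linarith)).le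
    have hright := abs_le.1 (hface (P.side / 2) hhalf)
    have hleft := abs_le.1 (hface (-(P.side / 2)) (by rwa [abs_neg]))
    have : |P.center i - Q.center i| ≤ Q.side / 2 - P.side / 2 :=
      abs_le.2 ⟨by linarith, by linarith⟩
    linarith
  · intro h x hx i
    linarith [h i, hx i, abs_sub_le (x i) (P.center i) (Q.center i)]

lemma norm_sub_center_le (hx : x ∈ Q.toSet) : ‖x - Q.center‖ ≤ √d * (Q.side / 2) := by
  have hnonneg : 0 ≤ √d * (Q.side / 2) := by
    obtain rfl | hd := Nat.eq_zero_or_pos d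
    · simp
    · exact mul_nonneg (Real.sqrt_nonneg _) ((abs_nonneg _).trans (hx ⟨0, hd⟩))
  rw [EuclideanSpace.norm_eq]
  refine Real.sqrt_le_iff.2 ⟨hnonneg, ?_⟩
  calc ∑ i, ‖(x - Q.center) i‖ ^ 2 ≤ ∑ _i : Fin d, (Q.side / 2) ^ 2 := by
        gcongr with i
        exact hx i
    _ = (√d * (Q.side / 2)) ^ 2 := by simp [mul_pow]

lemma half_side_lt_norm_sub_center (hQ : 0 ≤ Q.side) (hQR : Q.toSet ⊆ R.toSet)
    (hx : x ∉ R.toSet) : Q.side / 2 < ‖x - R.center‖ := by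
  obtain ⟨i, hi⟩ : ∃ i, R.side / 2 < |x i - R.center i| := by simpa [toSet] using hx
  have hcoord : |x i - R.center i| ≤ ‖x - R.center‖ := PiLp.norm_apply_le (x - R.center) i
  linarith [(toSet_subset_toSet_iff hQ).1 hQR i, abs_nonneg (Q.center i - R.center i)]

lemma isClosed_toSet (Q : Cube d) : IsClosed Q.toSet := by
  simp only [toSet, ofPred_forall]
  exact isClosed_iInter fun i ↦ isClosed_le (by fun_prop) continuous_const

lemma measurableSet_toSet (Q : Cube d) : MeasurableSet Q.toSet := Q.isClosed_toSet.measurableSet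

lemma measure_toSet_lt_top (μ : Measure (Euc d)) [IsLocallyFiniteMeasure μ] (Q : Cube d) :
    μ Q.toSet < ∞ :=
  (isBounded_closedBall.subset fun _ hx ↦
    mem_closedBall_iff_norm.2 (norm_sub_center_le hx)).measure_lt_top

lemma subset_encl_left (P Q : Cube d) : P.toSet ⊆ (P.encl Q).toSet := fun x hx i ↦
  (hx i).trans (by gcongr; exact le_max_left _ _)

lemma subset_encl_right (P Q : Cube d) : Q.toSet ⊆ (P.encl Q).toSet := fun x hx i ↦ by
  have hi : 2 * |Q.center i - P.center i| + Q.side ≤ (P.encl Q).side :=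
    (le_ciSup (f := fun i ↦ 2 * |Q.center i - P.center i| + Q.side)
      (finite_range _).bddAbove i).trans (le_max_right _ _)
  have : |x i - P.center i| ≤ (P.encl Q).side / 2 := by
    linarith [hx i, abs_sub_le (x i) (Q.center i) (P.center i)]
  exact this

lemma encl_subset (hP : 0 ≤ P.side) (hQ : 0 ≤ Q.side) (hc : P.center = S.center)
    (hPS : P.toSet ⊆ S.toSet) (hQS : Q.toSet ⊆ S.toSet) : (P.encl Q).toSet ⊆ S.toSet := by
  intro x hx i
  have : Nonempty (Fin d) := ⟨i⟩
  have hside : (P.encl Q).side ≤ S.side := by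
    refine max_le ?_ (ciSup_le fun j ↦ ?_)
    · simpa [hc] using (toSet_subset_toSet_iff hP).1 hPS i
    · simpa only [hc] using (toSet_subset_toSet_iff hQ).1 hQS j
  rw [← hc]
  exact (hx i).trans (by gcongr)

lemma encl_subset_encl (hP : 0 ≤ P.side) (hQ : 0 ≤ Q.side) (hQR : Q.toSet ⊆ R.toSet) :
    (P.encl Q).toSet ⊆ (P.encl R).toSet :=
  encl_subset hP hQ rfl (subset_encl_left P R) (hQR.trans (subset_encl_right P R))

lemma toSet_encl_eq_left (hP : 0 ≤ P.side) (hQ : 0 ≤ Q.side) (hQP : Q.toSet ⊆ P.toSet) :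
    (P.encl Q).toSet = P.toSet :=
  (encl_subset hP hQ rfl Subset.rfl hQP).antisymm (subset_encl_left P Q)

lemma toSet_encl_eq_of_center_eq (hP : 0 ≤ P.side) (hQ : 0 ≤ Q.side) (hR : 0 ≤ R.side)
    (hPQ : P.toSet ⊆ Q.toSet) (hQR : Q.toSet ⊆ R.toSet) (hc : P.center = Q.center) :
    (P.encl R).toSet = (Q.encl R).toSet := by
  apply Subset.antisymm
  · exact encl_subset (S := Q.encl R) hP hR hc (hPQ.trans (subset_encl_left Q R))
      (subset_encl_right Q R)
  · exact encl_subset (S := P.encl R) hQ hR hc.symm (hQR.trans (subset_encl_right P R))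
      (subset_encl_right P R)

lemma norm_sub_center_le_of_mem_encl (hP : 0 ≤ P.side) (hQ : 0 ≤ Q.side)
    (hPQ : P.toSet ⊆ Q.toSet) (hx : x ∈ (P.encl Q).toSet) : ‖x - P.center‖ ≤ √d * Q.side := by
  let D : Cube d := ⟨P.center, 2 * Q.side⟩
  have hQD : Q.toSet ⊆ D.toSet := (toSet_subset_toSet_iff hQ).2 fun i ↦ by
    have hi := (toSet_subset_toSet_iff hP).1 hPQ i
    simp only [D]
    rw [abs_sub_comm]
    linarith
  simpa [D] using norm_sub_center_le (encl_subset hP hQ (S := D) rfl (hPQ.trans hQD) hQD hx)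

lemma norm_sub_center_le_mul (hP : 0 ≤ P.side) (hQ : 0 ≤ Q.side) (hPQ : P.toSet ⊆ Q.toSet)
    (hx : x ∉ Q.toSet) : ‖x - P.center‖ ≤ (1 + √d) * ‖x - Q.center‖ := by
  simp only [← dist_eq_norm]
  refine dist_le_one_add_mul_dist (s := Q.side / 2) (Real.sqrt_nonneg _) ?_ ?_
  · rw [dist_comm, dist_eq_norm]
    exact norm_sub_center_le (hPQ (center_mem_toSet hP))
  · rw [dist_eq_norm]
    exact (half_side_lt_norm_sub_center hQ Subset.rfl hx).le

lemma norm_sub_center_le_mul_of_notMem_encl (hP : 0 ≤ P.side) (hQ : 0 ≤ Q.side)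
    (hPQ : P.toSet ⊆ Q.toSet) (hx : x ∉ (P.encl Q).toSet) :
    ‖x - Q.center‖ ≤ (1 + √d) * ‖x - P.center‖ := by
  simp only [← dist_eq_norm]
  refine dist_le_one_add_mul_dist (s := Q.side / 2) (Real.sqrt_nonneg _) ?_ ?_
  · rw [dist_eq_norm]
    exact norm_sub_center_le (hPQ (center_mem_toSet hP))
  · rw [dist_eq_norm]
    exact (half_side_lt_norm_sub_center hQ (subset_encl_right P Q) hx).le

end Cube

open Cube

variable {μ : Measure (Euc d)} {n C₀ : ℝ} {P Q R : Cube d}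

lemma GrowthCond.const_nonneg (hμ : GrowthCond μ C₀ n) {z : Euc d} (hz : z ∈ msupport μ) :
    0 ≤ C₀ := by
  have hpos := (hz 1 one_pos).trans_le (hμ z hz 1 one_pos)
  rw [Real.one_rpow, mul_one, ENNReal.ofReal_pos] at hpos
  exact hpos.le

lemma integrableOn_toSet_sdiff [IsLocallyFiniteMeasure μ] (hn : 0 ≤ n) (hQ : 0 < Q.side)
    (R : Cube d) : IntegrableOn (fun x ↦ ‖x - Q.center‖ ^ (-n)) (R.toSet \ Q.toSet) μ := by
  simp only [← dist_eq_norm]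
  refine integrableOn_rpow_neg_dist hn (half_pos hQ)
    (R.measurableSet_toSet.diff Q.measurableSet_toSet)
    ((measure_mono sdiff_subset).trans_lt (R.measure_toSet_lt_top μ)).ne fun x hx ↦ ?_
  rw [dist_eq_norm]
  exact (half_side_lt_norm_sub_center hQ.le Subset.rfl hx.2).le

lemma cdelta_eq_setIntegral (hP : 0 ≤ P.side) (hQ : 0 ≤ Q.side) (hPQ : P.toSet ⊆ Q.toSet) :
    cdelta μ n P Q = ∫ x in (P.encl Q).toSet \ P.toSet, ‖x - P.center‖ ^ (-n) ∂μ := by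
  rw [cdelta, toSet_encl_eq_left hQ hP hPQ, sdiff_self, setIntegral_empty]
  exact max_eq_left (integral_nonneg fun x ↦ by positivity)

lemma cdelta_eq_add_setIntegral [IsLocallyFiniteMeasure μ] (hn : 0 ≤ n) (hP : 0 < P.side)
    (hQ : 0 ≤ Q.side) (hR : 0 ≤ R.side) (hPQ : P.toSet ⊆ Q.toSet) (hQR : Q.toSet ⊆ R.toSet) :
    cdelta μ n P R = cdelta μ n P Q +
      ∫ x in (P.encl R).toSet \ (P.encl Q).toSet, ‖x - P.center‖ ^ (-n) ∂μ := by
  rw [cdelta_eq_setIntegral hP.le hQ hPQ, cdelta_eq_setIntegral hP.le hR (hPQ.trans hQR),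
    ← integral_inter_add_sdiff (P.encl Q).measurableSet_toSet (integrableOn_toSet_sdiff hn hP _),
    ← inter_sdiff_right_comm, inter_eq_right.2 (encl_subset_encl hP.le hQ hQR), sdiff_sdiff,
    union_eq_right.2 (subset_encl_left P Q)]

lemma cdelta_eq_add_of_center_eq [IsLocallyFiniteMeasure μ] (hn : 0 ≤ n) (hP : 0 < P.side)
    (hQ : 0 ≤ Q.side) (hR : 0 ≤ R.side) (hPQ : P.toSet ⊆ Q.toSet) (hQR : Q.toSet ⊆ R.toSet)
    (hc : P.center = Q.center) : cdelta μ n P R = cdelta μ n P Q + cdelta μ n Q R := by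
  rw [cdelta_eq_add_setIntegral hn hP hQ hR hPQ hQR, cdelta_eq_setIntegral hQ hR hQR,
    toSet_encl_eq_of_center_eq hP.le hQ hR hPQ hQR hc,
    toSet_encl_eq_of_center_eq hP.le hQ hQ hPQ Subset.rfl hc,
    toSet_encl_eq_left hQ hQ Subset.rfl, hc]

lemma GrowthCond.setIntegral_le_of_comparable (hμ : GrowthCond μ C₀ n) (hn : 0 ≤ n) {z : Euc d}
    (hz : z ∈ msupport μ) {S : Set (Euc d)} {ℓ : ℝ} (hℓ : 0 < ℓ)
    (hlower : ∀ x ∈ S, ℓ / 2 ≤ (1 + √d) * ‖x - z‖) (hupper : ∀ x ∈ S, ‖x - z‖ ≤ 2 * √d * ℓ) :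
    ∫ x in S, ‖x - z‖ ^ (-n) ∂μ ≤ C₀ * (4 * (1 + √d) ^ 2) ^ n := by
  have hratio : 2 * (1 + √d) * ℓ / (ℓ / 2 / (1 + √d)) = 4 * (1 + √d) ^ 2 := by
    field_simp
    norm_num
  rw [← hratio]
  simp only [← dist_eq_norm] at hlower hupper ⊢
  refine setIntegral_rpow_neg_dist_le_of_growth hn (hμ.const_nonneg hz) (by positivity)
    (by positivity) (hμ z hz) fun x hx ↦ ⟨?_, ?_⟩
  · exact (div_le_iff₀' (by positivity)).2 (hlower x hx)
  · linarith [hupper x hx]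

lemma GrowthCond.setIntegral_encl_sdiff_encl_sdiff_le (hμ : GrowthCond μ C₀ n) (hn : 0 ≤ n)
    (hP : IsCube μ P) (hQ : 0 ≤ Q.side) (hR : 0 < R.side) (hPQ : P.toSet ⊆ Q.toSet)
    (hQR : Q.toSet ⊆ R.toSet) :
    ∫ x in ((P.encl R).toSet \ (P.encl Q).toSet) \ ((Q.encl R).toSet \ Q.toSet),
      ‖x - P.center‖ ^ (-n) ∂μ ≤ C₀ * (4 * (1 + √d) ^ 2) ^ n := by
  refine hμ.setIntegral_le_of_comparable hn hP.1 hR (fun x hx ↦ ?_) fun x hx ↦ ?_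
  · have hxQ : x ∉ (Q.encl R).toSet := fun h ↦
      hx.2 ⟨h, fun hxQ ↦ hx.1.2 (subset_encl_right P Q hxQ)⟩
    exact (half_side_lt_norm_sub_center (R := Q.encl R) hR.le (subset_encl_right Q R) hxQ).le.trans
      (norm_sub_center_le_mul_of_notMem_encl (Q := Q) hP.2.le hQ hPQ hx.1.2)
  · have := norm_sub_center_le_of_mem_encl hP.2.le hR.le (hPQ.trans hQR) hx.1.1
    linarith [mul_nonneg (Real.sqrt_nonneg d) hR.le]

lemma GrowthCond.setIntegral_encl_sdiff_sdiff_encl_le (hμ : GrowthCond μ C₀ n) (hn : 0 ≤ n)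
    (hP : 0 ≤ P.side) (hQ : IsCube μ Q) (hR : 0 < R.side) (hPQ : P.toSet ⊆ Q.toSet)
    (hQR : Q.toSet ⊆ R.toSet) :
    ∫ x in ((Q.encl R).toSet \ Q.toSet) \ (P.encl R).toSet, ‖x - Q.center‖ ^ (-n) ∂μ ≤
      C₀ * (4 * (1 + √d) ^ 2) ^ n := by
  refine hμ.setIntegral_le_of_comparable hn hQ.1 hR (fun x hx ↦ ?_) fun x hx ↦ ?_
  · exact (half_side_lt_norm_sub_center (R := P.encl R) hR.le (subset_encl_right P R) hx.2).le.trans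
      (norm_sub_center_le_mul (P := P) hP hQ.2.le hPQ hx.1.2)
  · have := norm_sub_center_le_of_mem_encl hQ.2.le hR.le hQR hx.1.1
    linarith [mul_nonneg (Real.sqrt_nonneg d) hR.le]

lemma GrowthCond.setIntegral_le_of_subset_encl_sdiff (hμ : GrowthCond μ C₀ n) (hn : 0 ≤ n)
    (hP : 0 ≤ P.side) (hQ : IsCube μ Q) (hPQ : P.toSet ⊆ Q.toSet) {S : Set (Euc d)}
    (hS : S ⊆ (P.encl Q).toSet \ Q.toSet) :
    ∫ x in S, ‖x - Q.center‖ ^ (-n) ∂μ ≤ C₀ * (4 * (1 + √d) ^ 2) ^ n := by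
  refine hμ.setIntegral_le_of_comparable hn hQ.1 hQ.2 (fun x hx ↦ ?_) fun x hx ↦ ?_
  · exact (half_side_lt_norm_sub_center hQ.2.le Subset.rfl (hS hx).2).le.trans
      (le_mul_of_one_le_left (norm_nonneg _) (by simp))
  · have hxP := norm_sub_center_le_of_mem_encl hP hQ.2.le hPQ (hS hx).1
    have hPQc := norm_sub_center_le (hPQ (center_mem_toSet hP))
    linarith [norm_sub_le_norm_sub_add_norm_sub x P.center Q.center,
      mul_nonneg (Real.sqrt_nonneg d) hQ.2.le]

lemma GrowthCond.setIntegral_encl_sdiff_sdiff_le [IsLocallyFiniteMeasure μ]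
    (hμ : GrowthCond μ C₀ n) (hn : 0 ≤ n) (hP : 0 ≤ P.side) (hQ : IsCube μ Q) (hR : 0 < R.side)
    (hPQ : P.toSet ⊆ Q.toSet) (hQR : Q.toSet ⊆ R.toSet) :
    ∫ x in ((Q.encl R).toSet \ Q.toSet) \ ((P.encl R).toSet \ (P.encl Q).toSet),
      ‖x - Q.center‖ ^ (-n) ∂μ ≤ 2 * (C₀ * (4 * (1 + √d) ^ 2) ^ n) := by
  have hinside : (((Q.encl R).toSet \ Q.toSet) \ ((P.encl R).toSet \ (P.encl Q).toSet)) ∩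
      (P.encl R).toSet ⊆ (P.encl Q).toSet \ Q.toSet :=
    fun x hx ↦ ⟨not_not.1 fun h ↦ hx.1.2 ⟨hx.2, h⟩, hx.1.1.2⟩
  have houtside : (((Q.encl R).toSet \ Q.toSet) \ ((P.encl R).toSet \ (P.encl Q).toSet)) \
      (P.encl R).toSet = ((Q.encl R).toSet \ Q.toSet) \ (P.encl R).toSet := by
    rw [sdiff_sdiff, union_eq_right.2 sdiff_subset]
  rw [← integral_inter_add_sdiff (P.encl R).measurableSet_toSet
    ((integrableOn_toSet_sdiff hn hQ.2 _).mono_set sdiff_subset), houtside, two_mul]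
  exact add_le_add (hμ.setIntegral_le_of_subset_encl_sdiff hn hP hQ hPQ hinside)
    (hμ.setIntegral_encl_sdiff_sdiff_encl_le hn hP hQ hR hPQ hQR)

lemma GrowthCond.abs_setIntegral_rpow_neg_norm_sub_le (hμ : GrowthCond μ C₀ n) (hn : 0 ≤ n)
    (hP : 0 ≤ P.side) (hQ : IsCube μ Q) (hPQ : P.toSet ⊆ Q.toSet) {S : Set (Euc d)}
    (hS : ∀ x ∈ S, x ∉ (P.encl Q).toSet) :
    |∫ x in S, (‖x - P.center‖ ^ (-n) - ‖x - Q.center‖ ^ (-n)) ∂μ| ≤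
      C₀ * (2 * n * 2 ^ n * (1 + √d) ^ (n + 1)) * √d := by
  have hC₀ := hμ.const_nonneg hQ.1
  have hcenter : dist P.center Q.center / (Q.side / 2) ≤ √d := by
    rw [div_le_iff₀ (half_pos hQ.2), dist_eq_norm]
    exact norm_sub_center_le (hPQ (center_mem_toSet hP))
  have hfar (x : Euc d) (hx : x ∈ S) : Q.side / 2 ≤ dist x Q.center ∧
      dist x Q.center ≤ (1 + √d) * dist x P.center := by
    simp only [dist_eq_norm]
    exact ⟨(half_side_lt_norm_sub_center hQ.2.le Subset.rfl fun hxQ ↦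
        hS x hx (subset_encl_right P Q hxQ)).le,
      norm_sub_center_le_mul_of_notMem_encl hP hQ.2.le hPQ (hS x hx)⟩
  simp only [← dist_eq_norm]
  refine (abs_setIntegral_rpow_neg_dist_sub_le hn hC₀ (by simp) (half_pos hQ.2)
    (hμ _ hQ.1) hfar).trans ?_
  gcongr

lemma GrowthCond.abs_setIntegral_encl_sdiff_sub_le [IsLocallyFiniteMeasure μ]
    (hμ : GrowthCond μ C₀ n) (hn : 0 ≤ n) (hP : IsCube μ P) (hQ : IsCube μ Q) (hR : 0 < R.side)
    (hPQ : P.toSet ⊆ Q.toSet) (hQR : Q.toSet ⊆ R.toSet) :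
    |∫ x in (P.encl R).toSet \ (P.encl Q).toSet, ‖x - P.center‖ ^ (-n) ∂μ -
        ∫ x in (Q.encl R).toSet \ Q.toSet, ‖x - Q.center‖ ^ (-n) ∂μ| ≤
      C₀ * (2 * n * 2 ^ n * (1 + √d) ^ (n + 1)) * √d + 2 * (C₀ * (4 * (1 + √d) ^ 2) ^ n) := by
  set A := (P.encl R).toSet \ (P.encl Q).toSet
  set B := (Q.encl R).toSet \ Q.toSet
  have hintA : IntegrableOn (fun x ↦ ‖x - P.center‖ ^ (-n)) A μ :=
    integrableOn_toSet_sdiff (Q := P.encl Q) hn (hP.2.trans_le (le_max_left _ _)) _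
  have hintB : IntegrableOn (fun x ↦ ‖x - Q.center‖ ^ (-n)) B μ :=
    integrableOn_toSet_sdiff hn hQ.2 _
  have hcommon := abs_le.1 <| hμ.abs_setIntegral_rpow_neg_norm_sub_le hn hP.2.le hQ hPQ
    (S := A ∩ B) fun x hx ↦ hx.1.2
  have hAB := hμ.setIntegral_encl_sdiff_encl_sdiff_le hn hP hQ.2.le hR hPQ hQR
  have hBA := hμ.setIntegral_encl_sdiff_sdiff_le hn hP.2.le hQ hR hPQ hQR
  have hAB_nonneg : 0 ≤ ∫ x in A \ B, ‖x - P.center‖ ^ (-n) ∂μ :=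
    integral_nonneg fun x ↦ by positivity
  have hBA_nonneg : 0 ≤ ∫ x in B \ A, ‖x - Q.center‖ ^ (-n) ∂μ :=
    integral_nonneg fun x ↦ by positivity
  rw [setIntegral_sub_setIntegral_eq
    ((P.encl R).measurableSet_toSet.diff (P.encl Q).measurableSet_toSet)
    ((Q.encl R).measurableSet_toSet.diff Q.measurableSet_toSet) hintA hintB]
  exact abs_le.2 ⟨by linarith, by linarith⟩

lemma GrowthCond.abs_cdelta_sub_add_le [IsLocallyFiniteMeasure μ] (hμ : GrowthCond μ C₀ n)
    (hn : 0 ≤ n) (hP : IsCube μ P) (hQ : IsCube μ Q) (hR : 0 < R.side) (hPQ : P.toSet ⊆ Q.toSet)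
    (hQR : Q.toSet ⊆ R.toSet) :
    |cdelta μ n P R - (cdelta μ n P Q + cdelta μ n Q R)| ≤
      C₀ * (2 * n * 2 ^ n * (1 + √d) ^ (n + 1)) * √d + 2 * (C₀ * (4 * (1 + √d) ^ 2) ^ n) := by
  rw [cdelta_eq_add_setIntegral hn hP.2 hQ.2.le hR.le hPQ hQR,
    cdelta_eq_setIntegral hQ.2.le hR.le hQR, add_sub_add_left_eq_sub]
  exact hμ.abs_setIntegral_encl_sdiff_sub_le hn hP hQ hR hPQ hQR

/-- Quasi-additivity of `δ`: for cubes `P ⊂ Q ⊂ R`,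
`|δ(P,R) − (δ(P,Q) + δ(Q,R))| ≤ ε₀`, with exact equality when `P` and `Q` are
concentric. -/
theorem cdelta_quasi_additive {d : ℕ} (n C₀ : ℝ) (hn : 0 < n) (hnd : n ≤ d) :
    ∃ ε₀ : ℝ, ∀ (μ : Measure (Euc d)) [IsLocallyFiniteMeasure μ], GrowthCond μ C₀ n →
      (∀ P Q R : Cube d, IsCube μ P → IsCube μ Q → IsCube μ R →
        P.toSet ⊆ Q.toSet → Q.toSet ⊆ R.toSet →
        |cdelta μ n P R - (cdelta μ n P Q + cdelta μ n Q R)| ≤ ε₀) ∧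
      (∀ P Q R : Cube d, IsCube μ P → IsCube μ Q → IsCube μ R →
        P.toSet ⊆ Q.toSet → Q.toSet ⊆ R.toSet → P.center = Q.center →
        cdelta μ n P R = cdelta μ n P Q + cdelta μ n Q R) :=
  ⟨_, fun _ _ hμ ↦
    ⟨fun _ _ _ hP hQ hR hPQ hQR ↦ hμ.abs_cdelta_sub_add_le hn.le hP hQ hR.2 hPQ hQR,
      fun _ _ _ hP hQ hR hPQ hQR hc ↦
        cdelta_eq_add_of_center_eq hn.le hP.2 hQ.2.le hR.2.le hPQ hQR hc⟩⟩
end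
end

section
/- Let α > 1 and β > α^n. Then for every x ∈ supp(μ) and every c > 0 there exists an (α,β)-doubling cube Q centered at x with ℓ(Q) ≥ c. -/
open MeasureTheory Metric Set Filter
open scoped ENNReal NNReal

noncomputable section

variable {d : ℕ}

/-! The measures of the cubes `α ^ k • Q` grow at most like `(α ^ n) ^ k`. If none of the cubes were
doubling, each dilation by `α` would multiply the measure by more than `β`, so the measures would
grow at least like `β ^ k`, which is impossible because `α ^ n < β`. -/

theorem exists_succ_le_mul_of_le_mul_pow {u : ℕ → ℝ≥0∞} {C a b : ℝ≥0∞} (hC : C ≠ ⊤) (hab : a < b)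
    (hu : ∀ k, u k ≤ C * a ^ k) : ∃ k, u (k + 1) ≤ b * u k := by
  by_contra! hlt
  have hgeom (k : ℕ) : b ^ k * u 1 ≤ u (k + 1) := by
    induction k with
    | zero => simp
    | succ k ih =>
      calc b ^ (k + 1) * u 1 = b * (b ^ k * u 1) := by ring
        _ ≤ b * u (k + 1) := by gcongr
        _ ≤ u (k + 1 + 1) := (hlt _).le
  have hCa : C * a ≠ ⊤ := ENNReal.mul_ne_top hC hab.ne_top
  have hbound (k : ℕ) : u 1 ≤ C * a * (a / b) ^ k := by
    have hle : u 1 * b ^ k ≤ C * a * a ^ k :=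
      calc u 1 * b ^ k = b ^ k * u 1 := mul_comm _ _
        _ ≤ u (k + 1) := hgeom k
        _ ≤ C * a ^ (k + 1) := hu (k + 1)
        _ = C * a * a ^ k := by ring
    have hCak : C * a * a ^ k ≠ ⊤ := ENNReal.mul_ne_top hCa (ENNReal.pow_ne_top hab.ne_top)
    calc u 1 ≤ C * a * a ^ k / b ^ k :=
          (ENNReal.le_div_iff_mul_le (.inl (pow_ne_zero k hab.ne_bot)) (.inr hCak)).2 hle
      _ = C * a * (a / b) ^ k := by
          rw [div_eq_mul_inv, div_eq_mul_inv, mul_pow, ENNReal.inv_pow, mul_assoc]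
  have hratio : a / b < 1 := ENNReal.div_lt_of_lt_mul (by rwa [one_mul])
  have hlim : Tendsto (fun k ↦ C * a * (a / b) ^ k) atTop (nhds 0) := by
    simpa using ENNReal.Tendsto.const_mul
      (ENNReal.tendsto_pow_atTop_nhds_zero_of_lt_one hratio) (.inr hCa)
  exact ((zero_le.trans_lt (hlt 0)).trans_le (ge_of_tendsto' hlim hbound)).false

theorem frequently_comp_mul_le_of_eventually_le_rpow {f : ℝ → ℝ≥0∞} {C n α β : ℝ} (hα : 1 < α)
    (hβ : α ^ n < β) (hf : ∀ᶠ s in atTop, f s ≤ ENNReal.ofReal (C * s ^ n)) :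
    ∃ᶠ s in atTop, f (α * s) ≤ ENNReal.ofReal β * f s := by
  have hα₀ : 0 < α := one_pos.trans hα
  have hαn : 0 < α ^ n := Real.rpow_pos_of_pos hα₀ n
  obtain ⟨N, hN⟩ := eventually_atTop.1 hf
  refine frequently_atTop.2 fun c ↦ ?_
  obtain ⟨s, hs, hcs, hNs⟩ : ∃ s, 0 < s ∧ c ≤ s ∧ N ≤ s :=
    ((eventually_gt_atTop 0).and ((eventually_ge_atTop c).and (eventually_ge_atTop N))).exists
  have hs_le (k : ℕ) : s ≤ α ^ k * s := le_mul_of_one_le_left hs.le (one_le_pow₀ hα.le)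
  have hgrowth (k : ℕ) :
      f (α ^ k * s) ≤ ENNReal.ofReal (C * s ^ n) * ENNReal.ofReal (α ^ n) ^ k := by
    have hpow : (α ^ k * s) ^ n = s ^ n * (α ^ n) ^ k := by
      rw [Real.mul_rpow (by positivity) hs.le, ← Real.rpow_pow_comm hα₀.le, mul_comm]
    calc f (α ^ k * s) ≤ ENNReal.ofReal (C * (α ^ k * s) ^ n) := hN _ (hNs.trans (hs_le k))
      _ = ENNReal.ofReal (C * s ^ n) * ENNReal.ofReal (α ^ n) ^ k := by
          rw [hpow, ← mul_assoc, ENNReal.ofReal_mul' (by positivity), ENNReal.ofReal_pow hαn.le]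
  obtain ⟨k, hk⟩ := exists_succ_le_mul_of_le_mul_pow ENNReal.ofReal_ne_top
    ((ENNReal.ofReal_lt_ofReal_iff (hαn.trans hβ)).2 hβ) hgrowth
  exact ⟨α ^ k * s, hcs.trans (hs_le k), by rwa [← mul_assoc, ← pow_succ']⟩

theorem cube_subset_closedBall {Q : Cube d} (hQ : 0 ≤ Q.side) :
    Q.toSet ⊆ closedBall Q.center (√d * (Q.side / 2)) := by
  intro y hy
  have hsup : dist y.ofLp Q.center.ofLp ≤ Q.side / 2 := (dist_pi_le_iff (by positivity)).2 hy
  calc dist y Q.center ≤ √d * dist y.ofLp Q.center.ofLp := by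
        simpa [NNReal.sqrt_eq_rpow, Real.sqrt_eq_rpow] using
          (PiLp.antilipschitzWith_ofLp 2 (fun _ : Fin d ↦ ℝ)).le_mul_dist y Q.center
    _ ≤ √d * (Q.side / 2) := by gcongr

theorem eventually_measure_cube_le_of_eventually_measure_ball_le {μ : Measure (Euc d)} {x : Euc d}
    {C n : ℝ} (hμ : ∀ᶠ r in atTop, μ (ball x r) ≤ ENNReal.ofReal (C * r ^ n)) :
    ∀ᶠ s in atTop, μ (Cube.mk x s).toSet ≤ ENNReal.ofReal (C * (√d + 1) ^ n * s ^ n) := by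
  have hscale : Tendsto (fun s : ℝ ↦ (√d + 1) * s) atTop atTop :=
    tendsto_id.const_mul_atTop (by positivity)
  filter_upwards [hscale.eventually hμ, eventually_gt_atTop 0] with s hball hs
  have hradius : √d * (s / 2) < (√d + 1) * s := by nlinarith [Real.sqrt_nonneg d]
  calc μ (Cube.mk x s).toSet
      ≤ μ (ball x ((√d + 1) * s)) :=
        measure_mono ((cube_subset_closedBall hs.le).trans (closedBall_subset_ball hradius))
    _ ≤ ENNReal.ofReal (C * ((√d + 1) * s) ^ n) := hball
    _ = ENNReal.ofReal (C * (√d + 1) ^ n * s ^ n) := by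
        rw [Real.mul_rpow (by positivity) hs.le, mul_assoc]

theorem exists_big_doubling_cube_general {μ : Measure (Euc d)} {x : Euc d} {C n α β : ℝ}
    (hα : 1 < α) (hβ : α ^ n < β)
    (hμ : ∀ᶠ r in atTop, μ (ball x r) ≤ ENNReal.ofReal (C * r ^ n)) :
    ∃ᶠ s in atTop, IsDoublingWith μ α β ⟨x, s⟩ :=
  frequently_comp_mul_le_of_eventually_le_rpow hα hβ
    (eventually_measure_cube_le_of_eventually_measure_ball_le hμ)

/-- Existence of big doubling cubes: for `α > 1` and `β > αⁿ`, every point of the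
support of `μ` is the center of arbitrarily large `(α,β)`-doubling cubes. -/
theorem exists_big_doubling_cube {d : ℕ} (n C₀ : ℝ) (hn : 0 < n) (hnd : n ≤ d)
    (μ : Measure (Euc d)) [IsLocallyFiniteMeasure μ] (hμ : GrowthCond μ C₀ n)
    (α β : ℝ) (hα : 1 < α) (hβ : α ^ n < β) :
    ∀ x ∈ msupport μ, ∀ c : ℝ, 0 < c →
      ∃ Q : Cube d, Q.center = x ∧ c ≤ Q.side ∧ IsDoublingWith μ α β Q := by
  intro x hx c _
  obtain ⟨s, hs, hQ⟩ := (exists_big_doubling_cube_general hα hβ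
    ((eventually_gt_atTop 0).mono (hμ x hx))).forall_exists_of_atTop c
  exact ⟨⟨x, s⟩, rfl, hs, hQ⟩
end
end
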